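/- Let F ∈ ℝ^{1×n} and let P ∈ ℝ^{n×n̂} be injective (i.e., of full column rank n̂), and set F̂ = FP. There exists a matrix P̂ ∈ ℝ^{n̂×n} such that F = F̂P̂ if and only if im P + ker F = ℝⁿ. -/

import Mathlib

/-!
A linear map `f` on a projective module factors through `g` exactly when `im f ⊆ im g`. For matrices
this says that `F = (F * P) * X` is solvable exactly when `im F ⊆ im (F * P) = F (im P)`, and
pulling this inclusion back along `F` turns it into `im P + ker F = ⊤`.
-/

section LinearMap

variable {R L M N : Type*}

theorem exists_comp_eq_iff_range_le [Semiring R] [AddCommMonoid L] [Module R L]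
    [AddCommMonoid M] [Module R M] [AddCommMonoid N] [Module R N] [Module.Projective R L]
    (g : M →ₗ[R] N) (f : L →ₗ[R] N) :
    (∃ h : L →ₗ[R] M, g ∘ₗ h = f) ↔ LinearMap.range f ≤ LinearMap.range g := by
  constructor
  · rintro ⟨h, rfl⟩
    exact LinearMap.range_comp_le_range h g
  · intro hfg
    obtain ⟨h, hh⟩ := Module.projective_lifting_property g.rangeRestrict
      (f.codRestrict (LinearMap.range g) fun x ↦ hfg (LinearMap.mem_range_self f x))
      g.surjective_rangeRestrict
    exact ⟨h, congrArg ((LinearMap.range g).subtype ∘ₗ ·) hh⟩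

theorem range_le_range_comp_iff [Ring R] [AddCommMonoid L] [Module R L]
    [AddCommGroup M] [Module R M] [AddCommGroup N] [Module R N]
    (f : M →ₗ[R] N) (p : L →ₗ[R] M) :
    LinearMap.range f ≤ LinearMap.range (f ∘ₗ p) ↔
      LinearMap.range p ⊔ LinearMap.ker f = ⊤ := by
  rw [LinearMap.range_comp, LinearMap.range_eq_map f, LinearMap.map_le_map_iff, top_le_iff]

end LinearMap

section Matrix

variable {R k m n : Type*} [Fintype k] [Fintype n]

theorem exists_eq_mul_iff_range_mulVecLin_le [CommSemiring R]
    (A : Matrix m n R) (B : Matrix m k R) :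
    (∃ X : Matrix k n R, A = B * X) ↔
      LinearMap.range A.mulVecLin ≤ LinearMap.range B.mulVecLin := by
  classical
  rw [← exists_comp_eq_iff_range_le]
  refine Matrix.toLin'.toEquiv.exists_congr fun X ↦ ?_
  calc
    A = B * X ↔ Matrix.toLin' (B * X) = Matrix.toLin' A := by
      rw [Matrix.toLin'.injective.eq_iff, eq_comm]
    _ ↔ B.mulVecLin ∘ₗ Matrix.toLin' X = A.mulVecLin := by
      rw [Matrix.toLin'_mul, Matrix.toLin'_apply' B, Matrix.toLin'_apply' A]

theorem stmt_8_general [CommRing R] (F : Matrix m n R) (P : Matrix n k R) :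
    (∃ Phat : Matrix k n R, F = (F * P) * Phat) ↔
      LinearMap.range P.mulVecLin ⊔ LinearMap.ker F.mulVecLin = ⊤ := by
  rw [exists_eq_mul_iff_range_mulVecLin_le, Matrix.mulVecLin_mul, range_le_range_comp_iff]

end Matrix

/-- existence of `P̂` with `F = F̂ P̂` (where `F̂ = F P`)
iff `im P + ker F = ℝⁿ`. -/
theorem stmt_8 {n n' : ℕ} (F : Matrix (Fin 1) (Fin n) ℝ)
    (P : Matrix (Fin n) (Fin n') ℝ) (hP : Function.Injective P.mulVecLin) :
    (∃ Phat : Matrix (Fin n') (Fin n) ℝ, F = (F * P) * Phat) ↔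
      LinearMap.range P.mulVecLin ⊔ LinearMap.ker F.mulVecLin = ⊤ :=
  stmt_8_general F P
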